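/- Let G be an antipodal distance-regular graph of diameter 3 and let q ≠ 0 be a real number such that the q-distance matrix 𝔻_q has exactly 2 distinct eigenvalues. Then either q = −1/2 and the intersection array of G is one of {9, 4, 1; 1, 4, 9}, {15, 8, 1; 1, 8, 15}, {27, 16, 1; 1, 16, 27}, or q = −1/3 and the intersection array of G is {35, 18, 1; 1, 18, 35}. -/

import Mathlib

open Matrix

variable {V : Type*} [Fintype V] [DecidableEq V]

/-- The distance-`i` matrix of a graph: the `(x,y)` entry is 1 if `dist x y = i`, else 0. -/
noncomputable def distM (G : SimpleGraph V) (i : ℕ) : Matrix V V ℝ :=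
  Matrix.of fun x y => if G.dist x y = i then (1 : ℝ) else 0

/-- The `q`-distance matrix `𝔻_q = ∑_{i=1}^D (1 + 1/q + ⋯ + 1/q^{i-1}) • A_i`. -/
noncomputable def qDist (G : SimpleGraph V) (D : ℕ) (q : ℝ) : Matrix V V ℝ :=
  ∑ i ∈ Finset.Icc 1 D, (∑ j ∈ Finset.range i, (1 / q) ^ j) • distM G i

/-- `G` is distance-regular with diameter `D` and intersection numbers `b i`, `c i`
(with `c 1 = 1`): for any vertices `x, y` at distance `i ≤ D`, the number of neighbors
of `y` at distance `i - 1` from `x` is `c i` and the number of neighbors of `y` at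
distance `i + 1` from `x` is `b i`. -/
def IsDRG (G : SimpleGraph V) (D : ℕ) (b c : ℕ → ℕ) : Prop :=
  G.Connected ∧
  (∀ x y : V, G.dist x y ≤ D) ∧
  (∃ x y : V, G.dist x y = D) ∧
  c 1 = 1 ∧
  ∀ i ≤ D, ∀ x y : V, G.dist x y = i →
    ({z : V | G.Adj y z ∧ G.dist x z = i - 1} : Set V).ncard = c i ∧
    ({z : V | G.Adj y z ∧ G.dist x z = i + 1} : Set V).ncard = b i

/-- `a i = k - b i - c i` as a real number, where `k = b 0`. -/
noncomputable def aInt (b c : ℕ → ℕ) (i : ℕ) : ℝ := (b 0 : ℝ) - (b i : ℝ) - (c i : ℝ)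

/-- `G` is antipodal with diameter `D`: being equal or at distance `D` is an equivalence
relation on the vertices. -/
def IsAntipodal (G : SimpleGraph V) (D : ℕ) : Prop :=
  ∀ u v w : V, G.dist u v = D → G.dist u w = D → (v = w ∨ G.dist v w = D)

/-- `G` is an antipodal `r`-cover with diameter `D`: every antipodal class has exactly `r`
elements. -/
def IsAntipodalCover (G : SimpleGraph V) (D r : ℕ) : Prop :=
  IsAntipodal G D ∧ ∀ x : V, ({y : V | y = x ∨ G.dist x y = D} : Set V).ncard = r

/-!
In an antipodal cover of diameter 3 one has `A₁ * A₃ = A₂`, so with `A₁ ^ 2 = k + a₁ A₁ + c₂ A₂`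
and the quadratic relation for `A₃` everything is expressed in `A₁` and `A₃`. Writing `t = r - 1`
for the antipodal class size minus one, their joint eigenvalues are `(k, t)`, `(-1, t)`, `(x, -1)`
and `(y, -1)`, where `x + y = a₁ - c₂` and `x * y = -k`. With `s = 1 / q ≠ 0` the `q`-distance
eigenvalues of `(x, -1)` and `(y, -1)` differ, so if there are only two `q`-distance eigenvalues
then those of `(k, t)` and `(-1, t)` are among them. This gives two equations in `k`, `c₂`, `t`,
`s`, `x`, `y`. They force `x` to be rational, hence an integer, and leave finitely many arrays.

Three of these have integral multiplicities and are excluded by looking at the neighborhood of a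
vertex. For `{63, 40, 1; 1, 40, 63}` the eigenvalue `-21` has multiplicity only 8: a multiple of its
projection, restricted to a neighborhood, has entries `±1` off the diagonal, so its Hadamard square
is nonsingular of order 63, whereas the symmetric square of `ℝ ^ 8` has dimension 36. For
`{15, 8, 1; 1, 4, 15}` the eigenvalue `5` has multiplicity 12, yet an integral multiple of its
projection, restricted to a neighborhood of 15 vertices, is nonsingular modulo 3. For
`{35, 27, 1; 1, 9, 35}` the local graph would be 7-regular on 35 vertices.
-/

section LinearAlgebra

variable {m n K : Type*} [Fintype n] [Field K]

theorem mem_spectrum_of_mul_eq_smul [DecidableEq n] {A M : Matrix n n K} {l : K}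
    (hM : M ≠ 0) (h : A * M = l • M) : l ∈ spectrum K A := by
  rw [spectrum.mem_iff]
  intro hunit
  have hzero : (algebraMap K (Matrix n n K) l - A) * M = 0 := by
    rw [sub_mul, h, ← Algebra.smul_def, sub_self]
  exact hM (hunit.mul_right_eq_zero.mp hzero)

theorem rank_mul_eq_trace_of_mul_self_eq_smul {M : Matrix n n K} {l : K}
    (hl : l ≠ 0) (h : M * M = l • M) : (M.rank : K) * l = M.trace := by
  classical
  have hidem : IsIdempotentElem (l⁻¹ • M) := by
    rw [IsIdempotentElem, smul_mul_smul_comm, h, smul_smul, mul_assoc, inv_mul_cancel₀ hl, mul_one]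
  have hproj : IsIdempotentElem (toLin' (l⁻¹ • M)) := hidem.map toLinAlgEquiv'
  have htrace := (LinearMap.IsIdempotentElem.isProj_range _ hproj).trace
  rw [map_smul, LinearMap.range_smul _ _ (inv_ne_zero hl), ← map_smul, trace_toLin'_eq,
    trace_smul, smul_eq_mul] at htrace
  rw [mul_comm, ← eq_inv_mul_iff_mul_eq₀ hl, htrace]
  rfl

theorem exists_eq_mul_of_rank (A : Matrix m n K) :
    ∃ (B : Matrix m (Fin A.rank) K) (C : Matrix (Fin A.rank) n K), A = B * C := by
  classical
  let β := Module.finBasis K (LinearMap.range A.mulVecLin)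
  have hcol (j : n) : A.col j ∈ LinearMap.range A.mulVecLin := ⟨Pi.single j 1, by simp⟩
  refine ⟨of fun i a => (β a : m → K) i, of fun a j => β.repr ⟨A.col j, hcol j⟩ a, ?_⟩
  ext i j
  have hsum : ∑ a, β.repr ⟨A.col j, hcol j⟩ a • (β a : m → K) = A.col j := by
    have h := congrArg (LinearMap.range A.mulVecLin).subtype (β.sum_repr ⟨A.col j, hcol j⟩)
    rw [map_sum] at h
    exact h
  calc A i j = (∑ a, β.repr ⟨A.col j, hcol j⟩ a • (β a : m → K)) i := by rw [hsum]; rfl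
    _ = _ := by
      rw [Finset.sum_apply, mul_apply]
      exact Finset.sum_congr rfl fun a _ => mul_comm _ _

-- A factorization `A = B * C` through `K ^ r` induces one of `A ⊙ A` through `Sym² (K ^ r)`.
theorem rank_hadamard_self_le (A : Matrix m n K) :
    (A ⊙ A).rank ≤ (A.rank + 1).choose 2 := by
  obtain ⟨B, C, hBC⟩ := exists_eq_mul_of_rank A
  let B₂ : Matrix m (Sym2 (Fin A.rank)) K := of fun i p => (p.map (B i)).mul
  let C₂ : Matrix (Sym2 (Fin A.rank)) n K := of fun p j =>
    ∑ ab : Fin A.rank × Fin A.rank with s(ab.1, ab.2) = p, C ab.1 j * C ab.2 j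
  have hfactor : A ⊙ A = B₂ * C₂ := by
    ext i j
    calc (A ⊙ A) i j
        = ∑ ab : Fin A.rank × Fin A.rank, (B i ab.1 * B i ab.2) * (C ab.1 j * C ab.2 j) := by
          rw [hadamard_apply, congrFun₂ hBC i j, mul_apply, Finset.sum_mul_sum,
            ← Finset.univ_product_univ, Finset.sum_product]
          exact Finset.sum_congr rfl fun a _ => Finset.sum_congr rfl fun b _ => by ring
      _ = (B₂ * C₂) i j := by
          simp only [mul_apply, B₂, C₂, of_apply, Finset.mul_sum]
          rw [← Finset.sum_fiberwise Finset.univ fun ab : Fin A.rank × Fin A.rank => s(ab.1, ab.2)]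
          refine Finset.sum_congr rfl fun p _ => Finset.sum_congr rfl fun ab hab => ?_
          rw [← (Finset.mem_filter.mp hab).2, Sym2.map_mk, Sym2.mul_mk]
  calc (A ⊙ A).rank ≤ B₂.rank := hfactor ▸ rank_mul_le_left _ _
    _ ≤ Fintype.card (Sym2 (Fin A.rank)) := rank_le_card_width _
    _ = (A.rank + 1).choose 2 := by rw [Sym2.card, Fintype.card_fin]

theorem det_smul_one_add_const_ne_zero [DecidableEq n] {a b : K} (ha : a ≠ 0)
    (hab : a + Fintype.card n * b ≠ 0) : (a • (1 : Matrix n n K) + of fun _ _ => b).det ≠ 0 := by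
  intro hdet
  obtain ⟨v, hv, hker⟩ := exists_mulVec_eq_zero_iff.mpr hdet
  have hentry (i : n) : a * v i + b * ∑ j, v j = 0 := by
    have := congrFun hker i
    rw [add_mulVec, smul_mulVec, one_mulVec] at this
    simpa [mulVec, dotProduct, Finset.mul_sum] using this
  have hsum : ∑ j, v j = 0 := by
    have htotal : (a + Fintype.card n * b) * ∑ j, v j = ∑ i, (a * v i + b * ∑ j, v j) := by
      rw [Finset.sum_add_distrib, ← Finset.mul_sum, Finset.sum_const, Finset.card_univ,
        nsmul_eq_mul]
      ring
    rw [Finset.sum_eq_zero fun i _ => hentry i] at htotal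
    exact (mul_eq_zero.mp htotal).resolve_left hab
  refine hv (funext fun i => ?_)
  simpa [hsum, ha] using hentry i

end LinearAlgebra

theorem det_map_ne_zero_of_injective {n R S T : Type*} [Fintype n] [DecidableEq n] [CommRing R]
    [CommRing S] [CommRing T] {f : R →+* S} (hf : Function.Injective f) {g : R →+* T}
    {M : Matrix n n R} (h : (M.map g).det ≠ 0) : (M.map f).det ≠ 0 := by
  rw [← RingHom.mapMatrix_apply, ← RingHom.map_det] at h ⊢
  rw [map_ne_zero_iff f hf]
  exact fun h0 => h (by rw [h0, map_zero])

theorem exists_int_eq_of_sq_eq {x : ℝ} {p q P Q : ℤ} (hx : x ^ 2 = p * x + q) (hQ : Q ≠ 0)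
    (h : x * Q = P) : ∃ z : ℤ, x = z := by
  have hint : IsIntegral ℤ x := by
    refine ⟨Polynomial.X ^ 2 - (Polynomial.C p * Polynomial.X + Polynomial.C q),
      Polynomial.monic_X_pow_sub (Polynomial.degree_linear_le.trans_lt (by norm_num)), ?_⟩
    simp only [Polynomial.eval₂_sub, Polynomial.eval₂_add, Polynomial.eval₂_mul,
      Polynomial.eval₂_pow, Polynomial.eval₂_X, Polynomial.eval₂_C, algebraMap_int_eq,
      Int.coe_castRingHom]
    rw [hx, sub_self]
  refine hint.exists_int_iff_exists_rat.mp ⟨P / Q, ?_⟩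
  push_cast
  exact eq_div_of_mul_eq (Int.cast_ne_zero.mpr hQ) h

section Distance

variable {G : SimpleGraph V} {x y : V} {i D : ℕ}

omit [Fintype V] [DecidableEq V]

theorem exists_adj_dist_eq (h : G.dist x y = i + 1) : ∃ z, G.Adj y z ∧ G.dist x z = i := by
  obtain ⟨p, hp⟩ := (SimpleGraph.Reachable.of_dist_ne_zero
    (by rw [h]; exact i.succ_ne_zero)).symm.exists_walk_length_eq_dist
  rw [SimpleGraph.dist_comm, h] at hp
  cases p with
  | nil => simp at hp
  | @cons _ z _ hyz p =>
    have hle : G.dist x z ≤ i := by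
      rw [SimpleGraph.dist_comm]
      exact (SimpleGraph.dist_le p).trans (Nat.succ_le_succ_iff.mp hp.le)
    have := hyz.diff_dist_adj (u := x)
    exact ⟨z, hyz, by omega⟩

theorem distM_transpose : (distM G i)ᵀ = distM G i := by
  ext x y
  simp only [transpose_apply, distM, of_apply, SimpleGraph.dist_comm]

theorem distM_zero [DecidableEq V] (hG : G.Connected) : distM G 0 = 1 := by
  ext x y
  simp only [distM, of_apply, hG.dist_eq_zero_iff, one_apply]

theorem distM_eq_zero_of_lt (h : ∀ x y, G.dist x y ≤ D) (hi : D < i) : distM G i = 0 := by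
  ext x y
  exact if_neg ((h x y).trans_lt hi).ne

theorem sum_distM (h : ∀ x y, G.dist x y ≤ D) :
    ∑ i ∈ Finset.range (D + 1), distM G i = of fun _ _ => 1 := by
  ext x y
  simp only [Matrix.sum_apply, distM, of_apply]
  rw [Finset.sum_ite_eq, if_pos (Finset.mem_range_succ_iff.mpr (h x y))]

theorem trace_distM [Fintype V] (hi : i ≠ 0) : (distM G i).trace = 0 := by
  simp only [trace, diag_apply, distM, of_apply, SimpleGraph.dist_self, hi.symm, if_false,
    Finset.sum_const_zero]

theorem distM_mulVec_one_apply [Fintype V] :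
    (distM G i *ᵥ 1) x = {z : V | G.dist x z = i}.ncard := by
  classical
  simp only [mulVec, dotProduct, distM, of_apply, Pi.one_apply, mul_one, Finset.sum_boole,
    Set.ncard_eq_toFinset_card', Set.toFinset_ofPred]

theorem distM_mul_distM_apply [Fintype V] {j : ℕ} :
    (distM G i * distM G j) x y = {z : V | G.dist z y = j ∧ G.dist x z = i}.ncard := by
  classical
  simp only [mul_apply, distM, of_apply, ← ite_and, ite_mul, one_mul, zero_mul]
  rw [Finset.sum_boole]
  simp [Set.ncard_eq_toFinset_card', and_comm]

theorem distM_mul_distM_one_apply [Fintype V] :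
    (distM G i * distM G 1) x y = {z : V | G.Adj y z ∧ G.dist x z = i}.ncard := by
  simp only [distM_mul_distM_apply, SimpleGraph.dist_eq_one_iff_adj, SimpleGraph.adj_comm]

end Distance

namespace IsDRG

variable {G : SimpleGraph V} {D : ℕ} {b c : ℕ → ℕ}

omit [Fintype V] [DecidableEq V]

theorem ncard_neighborSet (hG : IsDRG G D b c) (x : V) : (G.neighborSet x).ncard = b 0 := by
  rw [← (hG.2.2.2.2 0 D.zero_le x x SimpleGraph.dist_self).2]
  congr 1
  ext z
  simp

theorem exists_dist_eq (hG : IsDRG G D b c) {i : ℕ} (hi : i ≤ D) : ∃ x y, G.dist x y = i := by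
  induction hi using Nat.decreasingInduction with
  | self => exact hG.2.2.1
  | of_succ j _ ih =>
    obtain ⟨x, y, hxy⟩ := ih
    obtain ⟨z, _, hxz⟩ := exists_adj_dist_eq hxy
    exact ⟨x, z, hxz⟩

theorem c_pos [Finite V] (hG : IsDRG G D b c) {i : ℕ} (hi : i + 1 ≤ D) : 0 < c (i + 1) := by
  obtain ⟨x, y, hxy⟩ := hG.exists_dist_eq hi
  rw [← (hG.2.2.2.2 (i + 1) hi x y hxy).1, Set.ncard_pos]
  exact exists_adj_dist_eq hxy

theorem b_pos [Finite V] (hG : IsDRG G D b c) {i : ℕ} (hi : i < D) : 0 < b i := by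
  obtain ⟨x, y, hxy⟩ := hG.exists_dist_eq (Nat.succ_le_of_lt hi)
  obtain ⟨z, hyz, hxz⟩ := exists_adj_dist_eq hxy
  rw [← (hG.2.2.2.2 i hi.le x z hxz).2, Set.ncard_pos]
  exact ⟨y, hyz.symm, hxy⟩

theorem ncard_adj_dist_eq [Finite V] (hG : IsDRG G D b c) {i : ℕ} (hi : i + 1 ≤ D) {x y : V}
    (hxy : G.dist x y = i + 1) :
    {z : V | G.Adj y z ∧ G.dist x z = i + 1}.ncard + b (i + 1) + c (i + 1) = b 0 := by
  obtain ⟨hc, hb⟩ := hG.2.2.2.2 (i + 1) hi x y hxy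
  rw [← hc, ← hb, ← hG.ncard_neighborSet y, ← Set.ncard_union_eq, ← Set.ncard_union_eq]
  · congr 1
    ext z
    simp only [Set.mem_union, Set.mem_ofPred_eq, SimpleGraph.mem_neighborSet, ← and_or_left,
      and_iff_left_iff_imp]
    intro hyz
    have := hyz.diff_dist_adj (u := x)
    omega
  all_goals
    rw [Set.disjoint_left]
    simp only [Set.mem_union, Set.mem_ofPred_eq]
    omega

theorem aInt_one_sub_eq (hG : IsDRG G D b c) {t : ℕ} (hb : b 1 = c 2 * t) :
    aInt b c 1 - c 2 = b 0 - c 2 * (t + 1) - 1 := by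
  rw [aInt, hb, hG.2.2.2.1]
  push_cast
  ring

theorem distM_mul_distM_one [Fintype V] (hG : IsDRG G D b c) {i : ℕ} (hi : i + 1 ≤ D) :
    distM G (i + 1) * distM G 1 =
      (b i : ℝ) • distM G i + aInt b c (i + 1) • distM G (i + 1)
        + (c (i + 2) : ℝ) • distM G (i + 2) := by
  ext x y
  rw [distM_mul_distM_one_apply]
  simp only [Matrix.add_apply, Matrix.smul_apply, distM, of_apply, smul_eq_mul, mul_ite, mul_one,
    mul_zero]
  obtain hxy | hxy | hxy | hxy : G.dist x y = i ∨ G.dist x y = i + 1 ∨ G.dist x y = i + 2 ∨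
    (G.dist x y ≠ i ∧ G.dist x y ≠ i + 1 ∧ G.dist x y ≠ i + 2) := by omega
  · simp [hxy, (hG.2.2.2.2 i (by omega) x y hxy).2]
  · have ha : aInt b c (i + 1) = {z : V | G.Adj y z ∧ G.dist x z = i + 1}.ncard := by
      rw [aInt, ← hG.ncard_adj_dist_eq hi hxy]
      push_cast
      ring
    simp [hxy, ha]
  · simpa [hxy] using (hG.2.2.2.2 (i + 2) (hxy ▸ hG.2.1 x y) x y hxy).1
  · have hempty : {z : V | G.Adj y z ∧ G.dist x z = i + 1} = ∅ := by
      refine Set.eq_empty_of_forall_notMem fun z ⟨hyz, hxz⟩ => ?_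
      have := hyz.diff_dist_adj (u := x)
      have := hyz.symm.diff_dist_adj (u := x)
      omega
    simp [hempty, hxy]

theorem distM_one_mul_self [Fintype V] [DecidableEq V] (hG : IsDRG G D b c) (hD : 1 ≤ D) :
    distM G 1 * distM G 1 =
      (b 0 : ℝ) • 1 + aInt b c 1 • distM G 1 + (c 2 : ℝ) • distM G 2 := by
  rw [hG.distM_mul_distM_one hD, distM_zero hG.1]

theorem distM_one_mulVec_one [Fintype V] (hG : IsDRG G D b c) :
    distM G 1 *ᵥ 1 = (b 0 : ℝ) • 1 := by
  ext x
  rw [distM_mulVec_one_apply, Pi.smul_apply, Pi.one_apply, smul_eq_mul, mul_one,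
    ← hG.ncard_neighborSet x]
  simp only [SimpleGraph.dist_eq_one_iff_adj]
  rfl

end IsDRG

section Antipodal

variable {G : SimpleGraph V} {D t : ℕ}

omit [Fintype V] [DecidableEq V]

theorem IsAntipodalCover.ncard_dist_eq [Finite V] (h : IsAntipodalCover G D (t + 1)) (hD : D ≠ 0)
    (x : V) : {y : V | G.dist x y = D}.ncard = t := by
  have hx : x ∉ {y : V | G.dist x y = D} := by simpa using hD.symm
  have hcard := Set.ncard_insert_of_notMem hx
  rw [show insert x {y : V | G.dist x y = D} = {y | y = x ∨ G.dist x y = D} from rfl, h.2 x]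
    at hcard
  omega

theorem IsAntipodalCover.distM_mul_self [Fintype V] [DecidableEq V]
    (h : IsAntipodalCover G D (t + 1)) (hD : D ≠ 0) :
    distM G D * distM G D = (t : ℝ) • 1 + ((t : ℝ) - 1) • distM G D := by
  ext x y
  rw [distM_mul_distM_apply]
  simp only [Matrix.add_apply, Matrix.smul_apply, one_apply, distM, of_apply, smul_eq_mul]
  have hrow := h.ncard_dist_eq hD x
  by_cases hxy : x = y
  · subst hxy
    simp [SimpleGraph.dist_comm (v := x), hrow, hD.symm]
  by_cases hdist : G.dist x y = D
  · have hinsert : insert y {z | G.dist z y = D ∧ G.dist x z = D} = {z | G.dist x z = D} := by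
      ext z
      have := h.1 x z y
      simp only [Set.mem_insert_iff, Set.mem_ofPred_eq]
      grind
    rw [← hinsert, Set.ncard_insert_of_notMem (by simpa using fun h0 => absurd h0.symm hD)] at hrow
    simp [hxy, hdist, ← hrow]
  · have hempty : {z | G.dist z y = D ∧ G.dist x z = D} = ∅ := by
      refine Set.eq_empty_of_forall_notMem fun z ⟨hzy, hxz⟩ => ?_
      rcases h.1 z x y (SimpleGraph.dist_comm.trans hxz) hzy with h | h
      exacts [hxy h, hdist h]
    simp [hempty, hxy, hdist]

end Antipodal

namespace IsDRG

variable {G : SimpleGraph V} {D : ℕ} {b c : ℕ → ℕ}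

omit [Fintype V] [DecidableEq V]

theorem b_pred_diam_eq_one (hG : IsDRG G (D + 1) b c) (hant : IsAntipodal G (D + 1))
    (hD : 2 ≤ D) : b D = 1 := by
  obtain ⟨u, v, huv⟩ := hG.exists_dist_eq le_rfl
  obtain ⟨w, hvw, huw⟩ := exists_adj_dist_eq huv
  rw [← (hG.2.2.2.2 D (by omega) u w huw).2, Set.ncard_eq_one]
  refine ⟨v, Set.eq_singleton_iff_unique_mem.mpr ⟨⟨hvw.symm, huv⟩, fun z ⟨hwz, huz⟩ => ?_⟩⟩
  rcases hant u v z huv huz with hvz | hvz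
  · exact hvz.symm
  · have htri := hG.1.dist_triangle (u := v) (v := w) (w := z)
    rw [SimpleGraph.dist_eq_one_iff_adj.mpr hvw, SimpleGraph.dist_eq_one_iff_adj.mpr hwz] at htri
    omega

theorem b_diam_eq_zero (hG : IsDRG G D b c) : b D = 0 := by
  obtain ⟨u, v, huv⟩ := hG.exists_dist_eq le_rfl
  rw [← (hG.2.2.2.2 D le_rfl u v huv).2]
  have hempty : {z : V | G.Adj v z ∧ G.dist u z = D + 1} = ∅ :=
    Set.eq_empty_of_forall_notMem fun z ⟨_, huz⟩ => by
      have := hG.2.1 u z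
      omega
  rw [hempty, Set.ncard_empty]

theorem c_diam_eq [Finite V] (hG : IsDRG G (D + 1) b c) (hant : IsAntipodal G (D + 1))
    (hD : D ≠ 0) : c (D + 1) = b 0 := by
  obtain ⟨u, v, huv⟩ := hG.exists_dist_eq le_rfl
  have hcount := hG.ncard_adj_dist_eq le_rfl huv
  have hempty : {z : V | G.Adj v z ∧ G.dist u z = D + 1} = ∅ := by
    refine Set.eq_empty_of_forall_notMem fun z ⟨hvz, huz⟩ => ?_
    rcases hant u v z huv huz with h | h
    · exact hvz.ne h
    · rw [SimpleGraph.dist_eq_one_iff_adj.mpr hvz] at h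
      omega
  rwa [hempty, Set.ncard_empty, hG.b_diam_eq_zero, zero_add, zero_add] at hcount

theorem distM_diam_mul_distM_one [Fintype V] (hG : IsDRG G (D + 1) b c)
    (hant : IsAntipodal G (D + 1)) (hD : 2 ≤ D) :
    distM G (D + 1) * distM G 1 = distM G D := by
  have ha : aInt b c (D + 1) = 0 := by
    simp [aInt, hG.b_diam_eq_zero, hG.c_diam_eq hant (by omega)]
  rw [hG.distM_mul_distM_one le_rfl, hG.b_pred_diam_eq_one hant hD, ha,
    distM_eq_zero_of_lt hG.2.1 (Nat.lt_succ_self _)]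
  simp

theorem distM_one_mul_distM_diam [Fintype V] (hG : IsDRG G (D + 1) b c)
    (hant : IsAntipodal G (D + 1)) (hD : 2 ≤ D) :
    distM G 1 * distM G (D + 1) = distM G D := by
  simpa only [transpose_mul, distM_transpose] using
    congrArg transpose (hG.distM_diam_mul_distM_one hant hD)

theorem c_two_mul_ncard_dist_eq_three [Finite V] (hG : IsDRG G 3 b c) (hant : IsAntipodal G 3)
    (x : V) : c 2 * {y : V | G.dist x y = 3}.ncard = b 1 := by
  have := Fintype.ofFinite V
  classical
  have hb : (b 0 : ℝ) ≠ 0 := Nat.cast_ne_zero.mpr (hG.b_pos (by norm_num)).ne'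
  have hsq := congrArg (· *ᵥ (1 : V → ℝ)) (hG.distM_one_mul_self (by norm_num))
  simp only [← hG.distM_diam_mul_distM_one hant le_rfl, add_mulVec, smul_mulVec,
    ← mulVec_mulVec, hG.distM_one_mulVec_one, mulVec_smul, one_mulVec] at hsq
  have hx := congrFun hsq x
  simp only [Pi.add_apply, Pi.smul_apply, Pi.one_apply, distM_mulVec_one_apply, smul_eq_mul,
    aInt, hG.2.2.2.1] at hx
  have : (c 2 * {y : V | G.dist x y = 3}.ncard : ℝ) = b 1 :=
    mul_left_cancel₀ hb (by push_cast at hx; linarith)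
  exact_mod_cast this

theorem exists_isAntipodalCover [Finite V] (hG : IsDRG G 3 b c) (hant : IsAntipodal G 3) :
    ∃ t, b 1 = c 2 * t ∧ IsAntipodalCover G 3 (t + 1) := by
  have hrow := hG.c_two_mul_ncard_dist_eq_three hant
  obtain ⟨u⟩ := hG.1.nonempty
  refine ⟨{y : V | G.dist u y = 3}.ncard, (hrow u).symm, hant, fun x => ?_⟩
  have hx : x ∉ {y : V | G.dist x y = 3} := by simp
  rw [← Nat.eq_of_mul_eq_mul_left (hG.c_pos (i := 1) (by norm_num)) ((hrow x).trans (hrow u).symm),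
    ← Set.ncard_insert_of_notMem hx]
  rfl

theorem card_eq [Fintype V] {t : ℕ} (hG : IsDRG G 3 b c) (hcov : IsAntipodalCover G 3 (t + 1)) :
    (Fintype.card V : ℝ) = (t + 1) * (b 0 + 1) := by
  classical
  obtain ⟨u⟩ := hG.1.nonempty
  have hsum := congrFun (congrArg (· *ᵥ (1 : V → ℝ)) (sum_distM hG.2.1)) u
  have hT : distM G 3 *ᵥ 1 = (t : ℝ) • (1 : V → ℝ) := by
    ext x
    simp [distM_mulVec_one_apply, hcov.ncard_dist_eq]
  simp only [Finset.sum_range_succ, Finset.sum_range_zero, zero_add, distM_zero hG.1, add_mulVec,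
    one_mulVec, ← hG.distM_diam_mul_distM_one hcov.1 le_rfl, ← mulVec_mulVec,
    hG.distM_one_mulVec_one, mulVec_smul, hT, Pi.add_apply, Pi.smul_apply, Pi.one_apply,
    smul_eq_mul] at hsum
  have hJ : ((of fun _ _ => 1 : Matrix V V ℝ) *ᵥ 1) u = Fintype.card V := by
    simp [mulVec, dotProduct]
  rw [← hJ, ← hsum]
  ring

end IsDRG

/-- For an antipodal cover of diameter 3, `(A₁ - y) * (A₃ - σ)` is a scalar multiple of the
projection onto the common eigenspace of `A₁` and `A₃` whose eigenvalues `x` and `τ` are the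
conjugates of `y` and `σ`; taking the product rather than the idempotent avoids all division. -/
noncomputable def eigenMatrix (G : SimpleGraph V) (y σ : ℝ) : Matrix V V ℝ :=
  (distM G 1 - y • 1) * (distM G 3 - σ • 1)

section EigenMatrix

variable {G : SimpleGraph V} {b c : ℕ → ℕ} {t : ℕ} {x y τ σ : ℝ}

theorem eigenMatrix_eq (hG : IsDRG G 3 b c) (hant : IsAntipodal G 3) :
    eigenMatrix G y σ =
      distM G 2 - σ • distM G 1 - y • distM G 3 + (y * σ) • 1 := by
  simp only [eigenMatrix, sub_mul, mul_sub, hG.distM_one_mul_distM_diam hant le_rfl,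
    mul_smul_comm, smul_mul_assoc, mul_one, one_mul]
  module

theorem trace_eigenMatrix (hG : IsDRG G 3 b c) (hant : IsAntipodal G 3) :
    (eigenMatrix G y σ).trace = y * σ * Fintype.card V := by
  rw [eigenMatrix_eq hG hant]
  simp [trace_distM]

theorem distM_mul_distM_sub_smul {D : ℕ} (hcov : IsAntipodalCover G D (t + 1)) (hD : D ≠ 0)
    (hsum : τ + σ = t - 1) (hprod : τ * σ = -t) :
    distM G D * (distM G D - σ • 1) = τ • (distM G D - σ • 1) := by
  rw [mul_sub, hcov.distM_mul_self hD, mul_smul_comm, mul_one, ← hsum,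
    ← neg_eq_iff_eq_neg.mpr hprod]
  module

theorem distM_three_mul_eigenMatrix (hG : IsDRG G 3 b c) (hcov : IsAntipodalCover G 3 (t + 1))
    (hsum : τ + σ = t - 1) (hprod : τ * σ = -t) :
    distM G 3 * eigenMatrix G y σ = τ • eigenMatrix G y σ := by
  have hcomm : Commute (distM G 3) (distM G 1 - y • 1) :=
    .sub_right ((hG.distM_diam_mul_distM_one hcov.1 le_rfl).trans
      (hG.distM_one_mul_distM_diam hcov.1 le_rfl).symm) ((Commute.one_right _).smul_right y)
  rw [eigenMatrix, ← mul_assoc, hcomm.eq, mul_assoc,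
    distM_mul_distM_sub_smul hcov (by norm_num) hsum hprod, mul_smul_comm]

theorem distM_one_mul_eigenMatrix (hG : IsDRG G 3 b c) (hcov : IsAntipodalCover G 3 (t + 1))
    (hsum : τ + σ = t - 1) (hprod : τ * σ = -t) (hxy : x + y = aInt b c 1 + c 2 * τ)
    (hxy' : x * y = -b 0) :
    distM G 1 * eigenMatrix G y σ = x • eigenMatrix G y σ := by
  have heigen := distM_mul_distM_sub_smul hcov (by norm_num) hsum hprod
  rw [eigenMatrix]
  set A := distM G 1
  set P := distM G 3 - σ • (1 : Matrix V V ℝ)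
  have hquad : A * (A * P) = (x + y) • (A * P) - (x * y) • P := by
    rw [← mul_assoc, hG.distM_one_mul_self (by norm_num), add_mul, add_mul, smul_mul_assoc,
      smul_mul_assoc, smul_mul_assoc, one_mul, ← hG.distM_one_mul_distM_diam hcov.1 le_rfl,
      mul_assoc, heigen, mul_smul_comm, hxy, hxy']
    module
  rw [sub_mul, smul_mul_assoc, one_mul, mul_sub, hquad, mul_smul_comm]
  module

theorem eigenMatrix_mul_self (hG : IsDRG G 3 b c) (hcov : IsAntipodalCover G 3 (t + 1))
    (hsum : τ + σ = t - 1) (hprod : τ * σ = -t) (hxy : x + y = aInt b c 1 + c 2 * τ)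
    (hxy' : x * y = -b 0) :
    eigenMatrix G y σ * eigenMatrix G y σ = ((x - y) * (τ - σ)) • eigenMatrix G y σ := by
  nth_rw 1 [eigenMatrix]
  rw [mul_assoc, sub_mul (distM G 3), distM_three_mul_eigenMatrix hG hcov hsum hprod,
    smul_mul_assoc, one_mul, ← sub_smul, mul_smul_comm, sub_mul,
    distM_one_mul_eigenMatrix hG hcov hsum hprod hxy hxy', smul_mul_assoc, one_mul, ← sub_smul,
    smul_smul, mul_comm]

theorem rank_eigenMatrix_mul (hG : IsDRG G 3 b c) (hcov : IsAntipodalCover G 3 (t + 1))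
    (hxy : x + y = aInt b c 1 - c 2) (hxy' : x * y = -b 0) (hne : x ≠ y) :
    (eigenMatrix G y t).rank * (x - y) = -(y * t * (b 0 + 1)) := by
  have ht : (t + 1 : ℝ) ≠ 0 := by positivity
  have hrank := rank_mul_eq_trace_of_mul_self_eq_smul
    (mul_ne_zero (sub_ne_zero.mpr hne) (by linarith [ht.symm] : (-1 - t : ℝ) ≠ 0))
    (eigenMatrix_mul_self hG hcov (by ring) (by ring) (by linarith) hxy')
  rw [trace_eigenMatrix hG hcov.1, hG.card_eq hcov] at hrank
  exact mul_right_cancel₀ ht (by linarith)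

omit [Fintype V] [DecidableEq V] in
theorem qDist_three (G : SimpleGraph V) (q : ℝ) :
    qDist G 3 q = distM G 1 + (1 + 1 / q) • distM G 2 + (1 + 1 / q + (1 / q) ^ 2) • distM G 3 := by
  simp [qDist, Finset.sum_Icc_succ_top, Finset.sum_range_succ]

theorem mem_spectrum_qDist (hG : IsDRG G 3 b c) (hcov : IsAntipodalCover G 3 (t + 1)) (q : ℝ)
    (hsum : τ + σ = t - 1) (hprod : τ * σ = -t) (hσ : σ ≠ 0)
    (hxy : x + y = aInt b c 1 + c 2 * τ) (hxy' : x * y = -b 0) (hy : y ≠ 0) :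
    x + (1 + 1 / q) * (x * τ) + (1 + 1 / q + (1 / q) ^ 2) * τ ∈ spectrum ℝ (qDist G 3 q) := by
  have hA := distM_one_mul_eigenMatrix hG hcov hsum hprod hxy hxy'
  have hT := distM_three_mul_eigenMatrix (y := y) hG hcov hsum hprod
  have hne : eigenMatrix G y σ ≠ 0 := by
    have := hG.1.nonempty
    intro h0
    have htrace := trace_eigenMatrix (y := y) (σ := σ) hG hcov.1
    rw [h0, trace_zero] at htrace
    exact mul_ne_zero (mul_ne_zero hy hσ) (Nat.cast_ne_zero.mpr Fintype.card_ne_zero) htrace.symm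
  refine mem_spectrum_of_mul_eq_smul hne ?_
  rw [qDist_three, ← hG.distM_one_mul_distM_diam hcov.1 le_rfl]
  simp only [add_mul, smul_mul_assoc, mul_assoc, hT, hA, mul_smul_comm]
  module

end EigenMatrix

theorem exists_add_eq_mul_eq_neg (d : ℝ) {k : ℝ} (hk : 0 < k) :
    ∃ x y : ℝ, x + y = d ∧ x * y = -k ∧ x ≠ y := by
  have hsq := Real.sq_sqrt (by positivity : 0 ≤ d ^ 2 + 4 * k)
  have hpos := Real.sqrt_pos.mpr (by positivity : 0 < d ^ 2 + 4 * k)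
  exact ⟨(d + √(d ^ 2 + 4 * k)) / 2, (d - √(d ^ 2 + 4 * k)) / 2, by ring, by linarith,
    by intro h; linarith⟩

theorem exists_spectrum_qDist_eq_pair {G : SimpleGraph V} {b c : ℕ → ℕ} {t : ℕ}
    (hG : IsDRG G 3 b c) (hcov : IsAntipodalCover G 3 (t + 1)) (ht : t ≠ 0) {q : ℝ} (hq : q ≠ 0)
    (h2 : (spectrum ℝ (qDist G 3 q)).ncard = 2) :
    ∃ x y : ℝ, x + y = aInt b c 1 - c 2 ∧ x * y = -b 0 ∧
      spectrum ℝ (qDist G 3 q) =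
        {-(1 / q * x) - (1 + 1 / q + (1 / q) ^ 2), -(1 / q * y) - (1 + 1 / q + (1 / q) ^ 2)} := by
  have hk : 0 < (b 0 : ℝ) := Nat.cast_pos.mpr (hG.b_pos (by norm_num))
  have hmem (x y : ℝ) (hxy : x + y = aInt b c 1 - c 2) (hxy' : x * y = -b 0) :
      -(1 / q * x) - (1 + 1 / q + (1 / q) ^ 2) ∈ spectrum ℝ (qDist G 3 q) := by
    have hy : y ≠ 0 := right_ne_zero_of_mul (hxy' ▸ neg_ne_zero.mpr hk.ne')
    convert mem_spectrum_qDist hG hcov q (τ := -1) (σ := t) (by ring) (by ring)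
      (Nat.cast_ne_zero.mpr ht) (by linarith) hxy' hy using 1
    ring
  obtain ⟨x, y, hxy, hxy', hne⟩ := exists_add_eq_mul_eq_neg (aInt b c 1 - c 2) hk
  refine ⟨x, y, hxy, hxy', (Set.eq_of_subset_of_ncard_le ?_ ?_
    (Set.finite_of_ncard_ne_zero ?_)).symm⟩
  · exact Set.pair_subset (hmem x y hxy hxy') (hmem y x (by linarith) (by linarith))
  · rw [h2, Set.ncard_pair]
    simpa [hq] using hne
  · rw [h2]
    norm_num

theorem exists_roots_of_ncard_spectrum_qDist_eq_two {G : SimpleGraph V} {b c : ℕ → ℕ} {t : ℕ}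
    (hG : IsDRG G 3 b c) (hcov : IsAntipodalCover G 3 (t + 1)) (hb : b 1 = c 2 * t) (ht : t ≠ 0)
    {q : ℝ} (hq : q ≠ 0) (h2 : (spectrum ℝ (qDist G 3 q)).ncard = 2) :
    ∃ x y : ℝ, x + y = aInt b c 1 - c 2 ∧ x * y = -b 0 ∧ 1 / q * (t + 1) = -(1 + x) ∧
      (t + 1 + 1 / q * t = 0 ∨ (b 0 + 1) * (t + 1 + 1 / q * t) = 1 / q * (x - y)) := by
  obtain ⟨x, y, hxy, hxy', hspec⟩ := exists_spectrum_qDist_eq_pair hG hcov ht hq h2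
  have hk : (b 0 : ℝ) ≠ 0 := Nat.cast_ne_zero.mpr (hG.b_pos (by norm_num)).ne'
  have hs : 1 / q ≠ 0 := one_div_ne_zero hq
  have ha : aInt b c 1 = b 0 - c 2 * t - 1 := by linarith [hG.aInt_one_sub_eq hb]
  have hmem_k := mem_spectrum_qDist hG hcov q (x := b 0) (y := -1) (τ := t) (σ := -1) (by ring)
    (by ring) (by norm_num) (by rw [ha]; ring) (by ring) (by norm_num)
  have hmem_neg_one := mem_spectrum_qDist hG hcov q (x := -1) (y := b 0) (τ := t) (σ := -1)
    (by ring) (by ring) (by norm_num) (by rw [ha]; ring) (by ring) hk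
  rw [hspec] at hmem_k hmem_neg_one
  generalize 1 / q = s at *
  wlog hx : -1 + (1 + s) * (-1 * t) + (1 + s + s ^ 2) * t = -(s * x) - (1 + s + s ^ 2)
    generalizing x y
  · exact this y x (by linarith) (by linarith) (hspec.trans (Set.pair_comm _ _)) hmem_k.symm
      hmem_neg_one.symm (hmem_neg_one.resolve_left hx)
  have hsx : s * (t + 1) = -(1 + x) := mul_left_cancel₀ hs (by linarith)
  refine ⟨x, y, hxy, hxy', hsx, hmem_k.imp (fun h => ?_) fun h => ?_⟩
  · have : (b 0 + 1 : ℝ) * (t + 1 + s * t) = 0 := by linear_combination h - s * hsx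
    exact (mul_eq_zero.mp this).resolve_left (by positivity)
  · linear_combination (Set.mem_singleton_iff.mp h) - s * hsx

section LocalGraph

variable {G : SimpleGraph V} {D : ℕ} {b c : ℕ → ℕ} {u : V}

omit [Fintype V] [DecidableEq V]

theorem IsDRG.card_neighborSet [Fintype (G.neighborSet u)] (hG : IsDRG G D b c) :
    Fintype.card (G.neighborSet u) = b 0 := by
  rw [← Nat.card_eq_fintype_card, Nat.card_coe_set_eq, hG.ncard_neighborSet]

theorem IsDRG.even_mul_of_add_eq [Finite V] (hG : IsDRG G D b c) (hD : 1 ≤ D) {a : ℕ}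
    (ha : a + b 1 + c 1 = b 0) : Even (b 0 * a) := by
  have := Fintype.ofFinite V
  classical
  obtain ⟨u⟩ := hG.1.nonempty
  have hdegree (z : G.neighborSet u) : (G.induce (G.neighborSet u)).degree z = a := by
    have hcount := hG.ncard_adj_dist_eq hD (SimpleGraph.dist_eq_one_iff_adj.mpr z.2)
    rw [SimpleGraph.degree, ← Set.ncard_coe_finset, SimpleGraph.coe_neighborFinset,
      ← Set.ncard_image_of_injective _ Subtype.val_injective]
    have himage : Subtype.val '' (G.induce (G.neighborSet u)).neighborSet z =
        {w : V | G.Adj z w ∧ G.dist u w = 0 + 1} := by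
      ext w
      simp [SimpleGraph.dist_eq_one_iff_adj, and_comm]
    rw [himage]
    rw [zero_add] at hcount ⊢
    omega
  have hsum := (G.induce (G.neighborSet u)).sum_degrees_eq_twice_card_edges
  rw [Finset.sum_congr rfl fun z _ => hdegree z, Finset.sum_const, Finset.card_univ,
    hG.card_neighborSet, smul_eq_mul] at hsum
  exact hsum ▸ even_two_mul _

theorem dist_eq_two_of_mem_neighborSet (hG : G.Connected) {z w : V} (hz : z ∈ G.neighborSet u)
    (hw : w ∈ G.neighborSet u) (hne : z ≠ w) (hadj : ¬G.Adj z w) : G.dist z w = 2 := by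
  refine le_antisymm ?_ (hG.one_lt_dist_of_ne_of_not_adj hne hadj)
  calc G.dist z w ≤ G.dist z u + G.dist u w := hG.dist_triangle
    _ = 2 := by
      rw [SimpleGraph.dist_eq_one_iff_adj.mpr hz.symm, SimpleGraph.dist_eq_one_iff_adj.mpr hw]

theorem eigenMatrix_apply_neighborSet [Fintype V] [DecidableEq V] [DecidableRel G.Adj]
    (hG : IsDRG G 3 b c) (hant : IsAntipodal G 3) {y σ : ℝ} (z w : G.neighborSet u) :
    eigenMatrix G y σ z w = if z = w then y * σ else if G.Adj z w then -σ else 1 := by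
  rw [eigenMatrix_eq hG hant]
  simp only [Matrix.add_apply, Matrix.sub_apply, Matrix.smul_apply, one_apply, distM, of_apply,
    smul_eq_mul, Subtype.val_inj]
  by_cases hzw : z = w
  · simp [hzw]
  by_cases hadj : G.Adj z w
  · simp [hzw, hadj, SimpleGraph.dist_eq_one_iff_adj.mpr hadj]
  · have hdist := dist_eq_two_of_mem_neighborSet hG.1 z.2 w.2 (Subtype.coe_ne_coe.mpr hzw) hadj
    simp [hzw, hadj, hdist]

-- For `σ = 1` the local entries off the diagonal are `±1`, so their squares are all `1`.
theorem le_choose_rank_eigenMatrix [Fintype V] [DecidableEq V] (hG : IsDRG G 3 b c)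
    (hant : IsAntipodal G 3) {y : ℝ} (hy : 1 < y ^ 2) :
    b 0 ≤ ((eigenMatrix G y 1).rank + 1).choose 2 := by
  classical
  obtain ⟨u⟩ := hG.1.nonempty
  let N : Matrix (G.neighborSet u) (G.neighborSet u) ℝ :=
    (eigenMatrix G y 1).submatrix Subtype.val Subtype.val
  have hN : N ⊙ N = (y ^ 2 - 1) • 1 + of fun _ _ => 1 := by
    ext z w
    simp only [N, hadamard_apply, submatrix_apply, eigenMatrix_apply_neighborSet hG hant,
      Matrix.add_apply, Matrix.smul_apply, one_apply, of_apply, smul_eq_mul]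
    split_ifs <;> ring
  have hdet : (N ⊙ N).det ≠ 0 := by
    rw [hN]
    exact det_smul_one_add_const_ne_zero (by linarith) (by positivity)
  calc b 0 = (N ⊙ N).rank := by
        rw [rank_of_det_ne_zero hdet, hG.card_neighborSet]
    _ ≤ (N.rank + 1).choose 2 := rank_hadamard_self_le N
    _ ≤ _ := Nat.choose_le_choose 2 (Nat.succ_le_succ (rank_submatrix_le _ _ _))

-- Modulo a prime dividing `σ + 1` the local entries off the diagonal are all `1`.
theorem le_rank_eigenMatrix [Fintype V] [DecidableEq V] (hG : IsDRG G 3 b c)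
    (hant : IsAntipodal G 3) {p : ℕ} [Fact p.Prime] {y σ : ℤ} (hσ : (p : ℤ) ∣ σ + 1)
    (hy : ¬(p : ℤ) ∣ y + 1) (hy' : ¬(p : ℤ) ∣ b 0 - (y + 1)) :
    b 0 ≤ (eigenMatrix G y σ).rank := by
  classical
  obtain ⟨u⟩ := hG.1.nonempty
  let N : Matrix (G.neighborSet u) (G.neighborSet u) ℤ :=
    of fun z w => if z = w then y * σ else if G.Adj z w then -σ else 1
  have hreal :
      N.map (Int.castRingHom ℝ) = (eigenMatrix G y σ).submatrix Subtype.val Subtype.val := by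
    ext z w
    simp only [N, map_apply, of_apply, submatrix_apply, eigenMatrix_apply_neighborSet hG hant]
    split_ifs <;> simp
  have hσ' : (σ : ZMod p) = -1 :=
    eq_neg_of_add_eq_zero_left (by exact_mod_cast (ZMod.intCast_zmod_eq_zero_iff_dvd _ p).mpr hσ)
  have hmod : N.map (Int.castRingHom (ZMod p)) = (-(y + 1 : ZMod p)) • 1 + of fun _ _ => 1 := by
    ext z w
    simp only [N, map_apply, of_apply, Matrix.add_apply, Matrix.smul_apply, one_apply, smul_eq_mul]
    split_ifs <;> simp [hσ']
  have hdet : (N.map (Int.castRingHom ℝ)).det ≠ 0 := by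
    refine det_map_ne_zero_of_injective (RingHom.injective_int _)
      (g := Int.castRingHom (ZMod p)) ?_
    rw [hmod]
    refine det_smul_one_add_const_ne_zero (neg_ne_zero.mpr ?_) ?_
    · exact_mod_cast mt (ZMod.intCast_zmod_eq_zero_iff_dvd _ p).mp hy
    · rw [hG.card_neighborSet, mul_one, neg_add_eq_sub]
      exact_mod_cast mt (ZMod.intCast_zmod_eq_zero_iff_dvd _ p).mp hy'
  calc b 0 = (N.map (Int.castRingHom ℝ)).rank := by
        rw [rank_of_det_ne_zero hdet, hG.card_neighborSet]
    _ ≤ _ := hreal ▸ rank_submatrix_le _ _ _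

end LocalGraph

section Arithmetic

-- Here `k = b 0`, `c = c 2`, `t = r - 1` and `s = 1 / q`; `x` and `y` are the eigenvalues of `A₁`
-- on the eigenspace of `A₃` for `-1`.

theorem eq_of_add_one_add_mul_eq_zero {k c t : ℕ} {x y s : ℝ} (ht : t ≠ 0)
    (hxy : x + y = k - c * (t + 1) - 1) (hxy' : x * y = -k) (hs : s * (t + 1) = -(1 + x))
    (h : t + 1 + s * t = 0) : t = 1 ∧ x = 3 ∧ s = -2 := by
  have hxt : x * t = t ^ 2 + t + 1 := by linear_combination t * hs - (t + 1) * h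
  obtain ⟨z, rfl⟩ := exists_int_eq_of_sq_eq (x := x) (p := k - c * (t + 1) - 1) (q := k)
    (P := t ^ 2 + t + 1) (Q := t)
    (by push_cast; linear_combination x * hxy - hxy')
    (by exact_mod_cast ht) (by exact_mod_cast hxt)
  have hdvd : (t : ℤ) ∣ 1 := ⟨z - t - 1, by linear_combination -(by exact_mod_cast hxt :
    z * (t : ℤ) = t ^ 2 + t + 1)⟩
  obtain rfl : t = 1 := by exact_mod_cast Int.eq_one_of_dvd_one (by positivity) hdvd
  push_cast at hxt h
  exact ⟨rfl, by linarith, by linarith⟩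

theorem eq_and_eq_of_mul_add_nine_eq {k c f : ℕ} (hc : c ≠ 0) (hkc : 2 * k = 6 + 3 * c)
    (hf : f * (k + 9) = k * (k + 1)) :
    k = 9 ∧ c = 4 ∨ k = 15 ∧ c = 8 ∨ k = 27 ∧ c = 16 ∨ k = 63 ∧ c = 40 := by
  have hdvd : k + 9 ∣ 72 := by
    refine (Nat.dvd_add_right ⟨k, ?_⟩).mp (⟨f + 8, ?_⟩ : k + 9 ∣ (k + 9) * k + 72)
    · rfl
    · linarith
  have hle := Nat.le_of_dvd (by norm_num) hdvd
  have hk : k ≤ 63 := by omega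
  interval_cases k <;> omega

theorem root_mul_eq {k c t x y s : ℝ} (hxy : x + y = k - c * (t + 1) - 1) (hxy' : x * y = -k)
    (hs : s * (t + 1) = -(1 + x)) (h : (k + 1) * (t + 1 + s * t) = s * (x - y)) :
    x * ((k + 1) * (t - 1) + c * (t + 1)) =
      (k + 1) * (t ^ 2 + t + 1) + k + c * (t + 1) + 1 := by
  linear_combination ((k + 1) * t - (x - y)) * hs - (t + 1) * h - (1 + x) * hxy
    + 2 * (x * hxy - hxy')

theorem exists_nat_eq_and_eq_neg {k c t : ℕ} {x y s : ℝ} (hk : k ≠ 0) (hc : c ≠ 0) (ht : t ≠ 0)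
    (hxy : x + y = k - c * (t + 1) - 1) (hxy' : x * y = -k) (hs : s * (t + 1) = -(1 + x))
    (h : (k + 1) * (t + 1 + s * t) = s * (x - y)) : ∃ n m : ℕ, x = n ∧ y = -m := by
  have hlinear := root_mul_eq hxy hxy' hs h
  have hcoeff : 0 < ((k : ℤ) + 1) * (t - 1) + c * (t + 1) := by
    have ht' : (0 : ℤ) ≤ t - 1 := by omega
    positivity
  have hcoeff' : 0 < ((k : ℝ) + 1) * (t - 1) + c * (t + 1) := by
    simpa using Int.cast_pos (R := ℝ).mpr hcoeff
  have hx : 0 < x := pos_of_mul_pos_left (by rw [hlinear]; positivity) hcoeff'.le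
  have hy : y < 0 := (pos_iff_neg_of_mul_neg (by rw [hxy', neg_lt_zero]; positivity)).mp hx
  obtain ⟨z, rfl⟩ := exists_int_eq_of_sq_eq (x := x) (p := k - c * (t + 1) - 1) (q := k)
    (by push_cast; linear_combination x * hxy - hxy') hcoeff.ne'
    (P := (k + 1) * (t ^ 2 + t + 1) + k + c * (t + 1) + 1) (by push_cast; exact hlinear)
  obtain ⟨w, rfl⟩ : ∃ w : ℤ, y = w := ⟨k - c * (t + 1) - 1 - z, by push_cast; linarith⟩
  lift z to ℕ using by exact_mod_cast hx.le
  obtain ⟨m, rfl⟩ := Int.exists_eq_neg_ofNat (by exact_mod_cast hy.le : w ≤ 0)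
  exact ⟨z, m, by simp, by simp⟩

theorem le_eight_of_mul_eq {n m t : ℤ} (ht : 1 ≤ t) (hm : 2 ≤ m) (hn : 0 ≤ n)
    (h : (n - t) * (t + 1) * (1 + n * m) = (1 + n) ^ 2 * (1 + m)) : t + 2 ≤ n ∧ n ≤ 8 := by
  have hlt : t < n := by
    by_contra! hle
    nlinarith [mul_nonneg (mul_nonneg (sub_nonneg.mpr hle) (by linarith : 0 ≤ t + 1))
      (by positivity : 0 ≤ 1 + n * m), (by positivity : 0 < (1 + n) ^ 2 * (1 + m))]
  have hne : n ≠ t + 1 := by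
    rintro rfl
    nlinarith
  have hle : t + 2 ≤ n := by omega
  refine ⟨hle, ?_⟩
  have hprod : 2 * (n - 1) ≤ (n - t) * (t + 1) := by nlinarith
  have hbound : 2 * (n - 1) * (1 + n * m) ≤ (1 + n) ^ 2 * (1 + m) :=
    h ▸ mul_le_mul_of_nonneg_right hprod (by positivity)
  by_contra! hn
  have hcoeff : 0 ≤ n ^ 2 - 4 * n - 1 := by nlinarith
  nlinarith [mul_nonneg (sub_nonneg.mpr hm) hcoeff]

theorem eq_of_sub_mul_add_one_mul_eq {n m t c : ℕ} (hc : c ≠ 0) (ht : t ≠ 0)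
    (hcm : ((t : ℤ) + 1) * c = (1 + n) * (m - 1))
    (h : ((n : ℤ) - t) * (t + 1) * (1 + n * m) = (1 + n) ^ 2 * (1 + m)) :
    t = 1 ∧ n = 5 ∧ m = 7 ∧ c = 18 ∨ t = 3 ∧ n = 5 ∧ m = 7 ∧ c = 9 ∨
      t = 2 ∧ n = 5 ∧ m = 3 ∧ c = 4 := by
  have hm : (2 : ℤ) ≤ m := by
    have : (0 : ℤ) < (1 + n) * (m - 1) := hcm ▸ by positivity
    have := pos_of_mul_pos_right this (by positivity)
    omega
  obtain ⟨htn, hn⟩ := le_eight_of_mul_eq (by omega) hm (by positivity) h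
  have hn' : n ≤ 8 := by omega
  have ht' : t ≤ 6 := by omega
  interval_cases n <;> interval_cases t <;> omega

end Arithmetic

section Classification

variable {G : SimpleGraph V} {b c : ℕ → ℕ} {t : ℕ} {x y q : ℝ}

omit [Fintype V] [DecidableEq V]
variable [Finite V]

theorem IsDRG.b_zero_ne_sixty_three (hG : IsDRG G 3 b c) (hcov : IsAntipodalCover G 3 2)
    (hb : b 1 = c 2) (hc : c 2 = 40) : b 0 ≠ 63 := by
  have := Fintype.ofFinite V
  classical
  intro hk
  have hrank := rank_eigenMatrix_mul (t := 1) (x := -21) (y := 3) hG hcov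
    (by rw [hG.aInt_one_sub_eq (t := 1) (by omega), hk, hc]; norm_num) (by rw [hk]; norm_num)
    (by norm_num)
  have hbound := le_choose_rank_eigenMatrix (y := 3) hG hcov.1 (by norm_num)
  push_cast [hk] at hrank
  have h8 : (eigenMatrix G 3 1).rank = 8 := by
    exact_mod_cast (by linarith : ((eigenMatrix G 3 1).rank : ℝ) = 8)
  rw [h8, hk] at hbound
  exact absurd hbound (by decide)

theorem IsDRG.b_zero_ne_fifteen (hG : IsDRG G 3 b c) (hcov : IsAntipodalCover G 3 3)
    (hb : b 1 = c 2 * 2) (hc : c 2 = 4) : b 0 ≠ 15 := by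
  have := Fintype.ofFinite V
  classical
  intro hk
  have hrank := rank_eigenMatrix_mul (t := 2) (x := 5) (y := -3) hG hcov
    (by rw [hG.aInt_one_sub_eq hb, hk, hc]; norm_num) (by rw [hk]; norm_num) (by norm_num)
  have hbound := le_rank_eigenMatrix (p := 3) (y := -3) (σ := 2) hG hcov.1 (by norm_num)
    (by norm_num) (by rw [hk]; norm_num)
  push_cast [hk] at hrank hbound
  have : (15 : ℝ) ≤ (eigenMatrix G (-3) 2).rank := by exact_mod_cast hbound
  linarith

theorem eq_neg_half_of_add_one_add_mul_eq_zero (hG : IsDRG G 3 b c)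
    (hcov : IsAntipodalCover G 3 (t + 1)) (hb : b 1 = c 2 * t) (ht : t ≠ 0)
    (hxy : x + y = aInt b c 1 - c 2) (hxy' : x * y = -b 0) (hs : 1 / q * (t + 1) = -(1 + x))
    (h : t + 1 + 1 / q * t = 0) :
    q = -(1 / 2) ∧ t = 1 ∧ (b 0 = 9 ∧ c 2 = 4 ∨ b 0 = 15 ∧ c 2 = 8 ∨ b 0 = 27 ∧ c 2 = 16) := by
  have := Fintype.ofFinite V
  classical
  have hc : c 2 ≠ 0 := (hG.c_pos (i := 1) (by norm_num)).ne'
  obtain ⟨rfl, rfl, hq⟩ :=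
    eq_of_add_one_add_mul_eq_zero ht (hxy.trans (hG.aInt_one_sub_eq hb)) hxy' hs h
  have hy : y = -(b 0 / 3) := by linarith
  subst hy
  have hrank := rank_eigenMatrix_mul hG hcov hxy hxy' (by linarith [(b 0).cast_nonneg (α := ℝ)])
  rw [hG.aInt_one_sub_eq hb] at hxy
  have hkc : 2 * b 0 = 6 + 3 * c 2 := by
    push_cast at hxy
    exact_mod_cast (by linarith : (2 * b 0 : ℝ) = 6 + 3 * c 2)
  have hrank' : (eigenMatrix G (-(b 0 / 3)) (1 : ℕ)).rank * (b 0 + 9) = b 0 * (b 0 + 1) := by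
    have : ((eigenMatrix G (-(b 0 / 3)) (1 : ℕ)).rank : ℝ) * (b 0 + 9) = b 0 * (b 0 + 1) := by
      push_cast at hrank ⊢
      linear_combination 3 * hrank
    exact_mod_cast this
  refine ⟨?_, rfl, ?_⟩
  · rw [← one_div_one_div q, hq]
    norm_num
  · have := hG.b_zero_ne_sixty_three hcov (by omega)
    have := eq_and_eq_of_mul_add_nine_eq hc hkc hrank'
    tauto

theorem eq_neg_third_of_mul_eq (hG : IsDRG G 3 b c) (hcov : IsAntipodalCover G 3 (t + 1))
    (hb : b 1 = c 2 * t) (ht : t ≠ 0) (hxy : x + y = aInt b c 1 - c 2) (hxy' : x * y = -b 0)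
    (hs : 1 / q * (t + 1) = -(1 + x))
    (h : (b 0 + 1) * (t + 1 + 1 / q * t) = 1 / q * (x - y)) :
    q = -(1 / 3) ∧ t = 1 ∧ b 0 = 35 ∧ c 2 = 18 := by
  have hk : b 0 ≠ 0 := (hG.b_pos (by norm_num)).ne'
  have hc : c 2 ≠ 0 := (hG.c_pos (i := 1) (by norm_num)).ne'
  rw [hG.aInt_one_sub_eq hb] at hxy
  obtain ⟨n, m, rfl, rfl⟩ := exists_nat_eq_and_eq_neg hk hc ht hxy hxy' hs h
  have hnm : (b 0 : ℝ) = n * m := by linarith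
  have hcm : ((t : ℝ) + 1) * c 2 = (1 + n) * (m - 1) := by linear_combination hxy + hnm
  have hprod : ((n : ℝ) - t) * (t + 1) * (1 + n * m) = (1 + n) ^ 2 * (1 + m) := by
    rw [hnm] at h
    linear_combination -(t + 1) * h + ((1 + n * m) * t - (n + m)) * hs
  have hk' : b 0 = n * m := by exact_mod_cast hnm
  rcases eq_of_sub_mul_add_one_mul_eq hc ht (by exact_mod_cast hcm) (by exact_mod_cast hprod) with
    ⟨rfl, rfl, rfl, hc2⟩ | ⟨rfl, rfl, rfl, hc2⟩ | ⟨rfl, rfl, rfl, hc2⟩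
  · refine ⟨?_, rfl, hk', hc2⟩
    rw [← one_div_one_div q, show 1 / q = -3 by push_cast at hs; linarith]
    norm_num
  · have := hG.even_mul_of_add_eq (by norm_num) (a := 7) (by rw [hb, hc2, hk', hG.2.2.2.1])
    rw [hk'] at this
    exact absurd this (by decide)
  · exact absurd hk' (hG.b_zero_ne_fifteen hcov hb hc2)

end Classification

/-- Proposition 3.9: if an antipodal distance-regular graph of diameter
3 has exactly 2 distinct `q`-distance eigenvalues for some `q ≠ 0`, then either
`q = −1/2` and its intersection array is one of `{9,4,1;1,4,9}`, `{15,8,1;1,8,15}`,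
`{27,16,1;1,16,27}`, or `q = −1/3` and its intersection array is `{35,18,1;1,18,35}`. -/
theorem stmt13 (G : SimpleGraph V) (b c : ℕ → ℕ) (hG : IsDRG G 3 b c)
    (hant : IsAntipodal G 3) (q : ℝ) (hq : q ≠ 0)
    (h2 : (spectrum ℝ (qDist G 3 q)).ncard = 2) :
    (q = -(1 / 2) ∧
      ((b 0 = 9 ∧ b 1 = 4 ∧ b 2 = 1 ∧ c 2 = 4 ∧ c 3 = 9) ∨
       (b 0 = 15 ∧ b 1 = 8 ∧ b 2 = 1 ∧ c 2 = 8 ∧ c 3 = 15) ∨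
       (b 0 = 27 ∧ b 1 = 16 ∧ b 2 = 1 ∧ c 2 = 16 ∧ c 3 = 27))) ∨
    (q = -(1 / 3) ∧ (b 0 = 35 ∧ b 1 = 18 ∧ b 2 = 1 ∧ c 2 = 18 ∧ c 3 = 35)) := by
  obtain ⟨t, hb1, hcov⟩ := hG.exists_isAntipodalCover hant
  have hb2 : b 2 = 1 := hG.b_pred_diam_eq_one hant le_rfl
  have hc3 : c 3 = b 0 := hG.c_diam_eq hant two_ne_zero
  have ht : t ≠ 0 := right_ne_zero_of_mul (hb1 ▸ (hG.b_pos (by norm_num)).ne')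
  obtain ⟨x, y, hxy, hxy', hs, h | h⟩ :=
    exists_roots_of_ncard_spectrum_qDist_eq_two hG hcov hb1 ht hq h2
  · obtain ⟨hq, rfl, harray⟩ :=
      eq_neg_half_of_add_one_add_mul_eq_zero hG hcov hb1 ht hxy hxy' hs h
    exact Or.inl ⟨hq, by omega⟩
  · obtain ⟨hq, rfl, harray⟩ := eq_neg_third_of_mul_eq hG hcov hb1 ht hxy hxy' hs h
    exact Or.inr ⟨hq, by omega⟩
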